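/- For every prime p ≥ 5 and every k ≥ 1, if G is a finite simple graph such that for every j the number of independent sets of size j in G equals the number of independent sets of size j in the cycle C_{p^k}, then G is isomorphic to C_{p^k} or G is isomorphic to D_{p^k}. -/

import Mathlib

open SimpleGraph Polynomial Finset

/-- The number of independent sets of size `k` in the graph `G`. -/
noncomputable def indepCount {V : Type*} [Fintype V] (G : SimpleGraph V) (k : ℕ) : ℕ :=
  Nat.card {s : Finset V // s.card = k ∧ ∀ u ∈ s, ∀ v ∈ s, ¬ G.Adj u v}

/-- The graph `D_n`: a triangle on the vertices `0, 1, 2` together with the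
pendant path `2 - 3 - ⋯ - (n-1)`. -/
def dGraph (n : ℕ) : SimpleGraph (Fin n) :=
  SimpleGraph.fromRel (fun u v =>
    (u.val = 0 ∧ v.val = 1) ∨ (u.val = 0 ∧ v.val = 2) ∨ (u.val = 1 ∧ v.val = 2) ∨
    (2 ≤ u.val ∧ v.val = u.val + 1))

/-!
The independent set counts are the coefficients of the independence polynomial `I(G)`, which is
multiplicative over connected components. Its low coefficients determine, through the additive
power sums of its reciprocal roots, two integers that are additive over components: the number of
edges minus the number of vertices, and the number of cherries minus the numbers of vertices and
triangles. Both vanish for a cycle on more than three vertices.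

No nonempty independent set of `C_{p^k}` is fixed by the rotation by one vertex, whose order is
`p^k`, so `I(G) = I(C_{p^k}) ≡ 1` mod `p`. Every factor of `I(G)` is then a constant mod `p`, so
both integers are divisible by `p` on each component. On a connected graph the first integer is at
least `-1`, and where it vanishes the second is at least `-1` as well; since both sum to zero over
the components, both vanish on each of them. A connected graph on which both vanish is a cycle
`C_n` or a triangle with a pendant path `D_n`, and for these `I(-1/4) = 2 / 2^n`. A graph on `n`
vertices with `c` such components has `I(-1/4) = 2^c / 2^n`, and comparing with the cycle yields
`c = 1`.
-/

section IndepPoly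

variable {V W : Type*} [Fintype V] [Fintype W] {G : SimpleGraph V} {H : SimpleGraph W}

open scoped Classical in
/-- The independence polynomial `∑ₖ iₖ(G) Xᵏ` of a finite graph, as a sum over its independent
sets. -/
noncomputable def indepPoly (G : SimpleGraph V) : ℤ[X] :=
  ∑ s ∈ {s : Finset V | G.IsIndepSet s}, X ^ #s

theorem indepPoly_eq_sum (G : SimpleGraph V)
    [DecidablePred fun s : Finset V ↦ G.IsIndepSet (s : Set V)] :
    indepPoly G = ∑ s ∈ {s : Finset V | G.IsIndepSet s}, X ^ #s := by
  unfold indepPoly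
  congr!

theorem indepCount_eq_card_indepSetFinset [DecidableEq V] [DecidableRel G.Adj] (j : ℕ) :
    indepCount G j = #(G.indepSetFinset j) := by
  rw [indepCount, Nat.card_eq_fintype_card, Fintype.card_subtype, indepSetFinset]
  congr 1 with s
  simp only [mem_filter, mem_univ, true_and, isNIndepSet_iff, isIndepSet_iff, Set.Pairwise,
    mem_coe]
  exact ⟨fun h ↦ ⟨fun u hu v hv _ ↦ h.2 u hu v hv, h.1⟩,
    fun h ↦ ⟨h.2, fun u hu v hv huv ↦ h.1 hu hv huv.ne huv⟩⟩

theorem coeff_indepPoly (G : SimpleGraph V) (j : ℕ) :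
    (indepPoly G).coeff j = indepCount G j := by
  classical
  simp only [indepPoly, finsetSum_coeff, coeff_X_pow, sum_boole, filter_filter,
    indepCount_eq_card_indepSetFinset, indepSetFinset, isNIndepSet_iff, eq_comm]

theorem indepPoly_eq_of_indepCount_eq (h : ∀ j, indepCount G j = indepCount H j) :
    indepPoly G = indepPoly H := by
  ext j
  simp only [coeff_indepPoly, h]

theorem coeff_indepPoly_zero (G : SimpleGraph V) : (indepPoly G).coeff 0 = 1 := by
  classical
  rw [coeff_indepPoly, indepCount_eq_card_indepSetFinset, Nat.cast_eq_one, card_eq_one]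
  refine ⟨∅, ?_⟩
  ext s
  simp +contextual [isNIndepSet_iff]

theorem indepCount_one (G : SimpleGraph V) : indepCount G 1 = Fintype.card V := by
  classical
  rw [indepCount_eq_card_indepSetFinset, ← card_univ,
    ← card_map ⟨fun v : V ↦ ({v} : Finset V), singleton_injective⟩]
  congr 1 with s
  simp only [mem_indepSetFinset_iff, isNIndepSet_iff, card_eq_one, Finset.mem_map, mem_univ,
    true_and, Function.Embedding.coeFn_mk]
  constructor
  · rintro ⟨-, v, rfl⟩
    exact ⟨v, rfl⟩
  · rintro ⟨v, rfl⟩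
    simp

theorem card_eq_of_indepPoly_eq (h : indepPoly G = indepPoly H) :
    Fintype.card V = Fintype.card W := by
  have := congrArg (coeff · 1) h
  simpa only [coeff_indepPoly, indepCount_one, Nat.cast_inj] using this

theorem indepPoly_of_isEmpty [IsEmpty V] (G : SimpleGraph V) : indepPoly G = 1 := by
  simp [indepPoly, eq_empty_of_isEmpty]

open scoped Classical in
theorem sum_indepSet_subset_range (f : H ↪g G) :
    ∑ s ∈ {s : Finset V | G.IsIndepSet s ∧ (s : Set V) ⊆ Set.range f}, (X : ℤ[X]) ^ #s =
      indepPoly H := by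
  refine (sum_nbij (fun s ↦ s.map f.toEmbedding) ?_ (Finset.map_injective _).injOn ?_
    (by simp)).symm
  · simp [isIndepSet_iff, Set.Pairwise]
  · intro s hs
    obtain ⟨t, -, rfl⟩ := subset_map_iff (f := f.toEmbedding) (t := univ).1
      (by simpa [← coe_subset] using (mem_filter.1 (mem_coe.1 hs)).2.2)
    exact ⟨t, by simpa [isIndepSet_iff, Set.Pairwise] using hs, rfl⟩

theorem indepPoly_congr (φ : G ≃g H) : indepPoly G = indepPoly H := by
  classical
  rw [← sum_indepSet_subset_range φ.toEmbedding, indepPoly]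
  have : Set.range φ = Set.univ := φ.surjective.range_eq
  simp [this]

theorem indepPoly_eq_add_X_mul {U : Type*} [Fintype U] {K : SimpleGraph U} (v : V)
    (f : H ↪g G) (hf : Set.range f = {v}ᶜ)
    (g : K ↪g G) (hg : Set.range g = {w | w ≠ v ∧ ¬G.Adj v w}) :
    indepPoly G = indepPoly H + X * indepPoly K := by
  classical
  rw [← sum_indepSet_subset_range f, ← sum_indepSet_subset_range g, hf, hg, indepPoly,
    ← sum_filter_not_add_sum_filter _ (fun s : Finset V ↦ v ∈ s), filter_filter, filter_filter,
    mul_sum]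
  congr 1
  · simp
  · refine sum_nbij' (fun s ↦ s.erase v) (fun s ↦ insert v s) ?_ ?_ ?_ ?_ ?_
    · simp only [isIndepSet_iff, Set.Pairwise, mem_coe, mem_filter, mem_univ, true_and,
        Set.subset_def, Set.mem_ofPred_eq, mem_erase, and_imp]
      grind
    · simp only [isIndepSet_iff, Set.Pairwise, mem_coe, mem_filter, mem_univ, true_and,
        Set.subset_def, Set.mem_ofPred_eq, mem_insert, and_imp]
      grind [SimpleGraph.adj_comm]
    · simp +contextual
    · simp only [mem_filter, mem_univ, true_and, Set.subset_def, mem_coe, Set.mem_ofPred_eq,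
        and_imp]
      grind
    · intro s hs
      rw [← pow_succ', card_erase_add_one (mem_filter.1 hs).2.2]

end IndepPoly

section Components

variable {V : Type*} {G : SimpleGraph V}

theorem isIndepSet_iff_forall_component (s : Finset V)
    [∀ c : G.ConnectedComponent, DecidablePred (· ∈ c)] :
    G.IsIndepSet (s : Set V) ↔ ∀ c : G.ConnectedComponent,
      c.toSimpleGraph.IsIndepSet (s.subtype (· ∈ c) : Finset c) := by
  refine ⟨fun h c u hu v hv huv huv' ↦ ?_, fun h u hu v hv huv huv' ↦ ?_⟩
  · exact h (by simpa using hu) (by simpa using hv) (Subtype.coe_ne_coe.2 huv) huv'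
  · have hvu : v ∈ G.connectedComponentMk u := ConnectedComponent.sound huv'.symm.reachable
    exact @h (G.connectedComponentMk u) ⟨u, rfl⟩ (by simpa using hu) ⟨v, hvu⟩ (by simpa using hv)
      (Subtype.coe_ne_coe.1 huv) huv'

open scoped Classical in
theorem indepPoly_eq_prod_component [Fintype V] (G : SimpleGraph V) :
    indepPoly G = ∏ c : G.ConnectedComponent, indepPoly c.toSimpleGraph := by
  let glue (t : ∀ c : G.ConnectedComponent, Finset c) : Finset V :=
    univ.biUnion fun c ↦ (t c).map (Function.Embedding.subtype _)
  have subtype_glue (t) (c : G.ConnectedComponent) : (glue t).subtype (· ∈ c) = t c := by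
    ext ⟨v, rfl⟩
    simp only [glue, mem_subtype, mem_biUnion, mem_univ, true_and, Finset.mem_map,
      Function.Embedding.subtype_apply]
    exact ⟨by rintro ⟨_, ⟨_, rfl⟩, hv, rfl⟩; exact hv, fun hv ↦ ⟨_, _, hv, rfl⟩⟩
  have glue_subtype (s : Finset V) : glue (fun c ↦ s.subtype (· ∈ c)) = s := by
    ext v
    simp only [glue, mem_biUnion, mem_univ, true_and, Finset.mem_map, mem_subtype]
    exact ⟨by rintro ⟨_, _, hv, rfl⟩; exact hv, fun hv ↦ ⟨_, ⟨v, rfl⟩, hv, rfl⟩⟩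
  have card_glue (t) : #(glue t) = ∑ c, #(t c) := by
    rw [card_biUnion]
    · simp only [card_map]
    · intro c _ d _ hcd
      simp only [Function.onFun, Finset.disjoint_left, Finset.mem_map]
      rintro _ ⟨⟨_, rfl⟩, -, rfl⟩ ⟨⟨_, rfl⟩, -, h⟩
      exact hcd (congrArg G.connectedComponentMk h).symm
  simp only [indepPoly_eq_sum, prod_univ_sum, prod_pow_eq_pow_sum]
  refine sum_nbij' (fun s c ↦ s.subtype (· ∈ c)) glue (fun s hs ↦ ?_) (fun t ht ↦ ?_)
    (fun s _ ↦ glue_subtype s) (fun t _ ↦ funext (subtype_glue t))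
    (fun s _ ↦ by rw [← card_glue, glue_subtype])
  · exact Fintype.mem_piFinset.2 fun c ↦ mem_filter.2
      ⟨mem_univ _, (isIndepSet_iff_forall_component s).1 (mem_filter.1 hs).2 c⟩
  · refine mem_filter.2 ⟨mem_univ _, (isIndepSet_iff_forall_component _).2 fun c ↦ ?_⟩
    rw [subtype_glue]
    exact (mem_filter.1 (Fintype.mem_piFinset.1 ht c)).2

end Components

section LowCoefficients

open Matrix

variable {V : Type*} [Fintype V] (G : SimpleGraph V) [DecidableRel G.Adj]

theorem sum_degree_eq_two_mul_card_edgeFinset :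
    ∑ v, (G.degree v : ℤ) = 2 * #G.edgeFinset :=
  mod_cast G.sum_degrees_eq_twice_card_edges

theorem two_mul_sum_choose_degree :
    2 * ∑ v, ((G.degree v).choose 2 : ℤ) = ∑ v, (G.degree v : ℤ) ^ 2 - 2 * #G.edgeFinset := by
  have choose_two (d : ℕ) : 2 * (d.choose 2 : ℤ) = (d : ℤ) ^ 2 - d := by
    induction d with
    | zero => simp
    | succ d ih =>
      rw [Nat.choose_succ_succ' d 1, Nat.choose_one_right]
      push_cast
      linarith
  rw [← sum_degree_eq_two_mul_card_edgeFinset, mul_sum, ← sum_sub_distrib]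
  exact sum_congr rfl fun v _ ↦ choose_two _

theorem indepCount_eq_card_cliqueFinset_compl [DecidableEq V] (j : ℕ) :
    indepCount G j = #(Gᶜ.cliqueFinset j) := by
  rw [indepCount_eq_card_indepSetFinset]
  congr 1 with s
  simp only [mem_indepSetFinset_iff, mem_cliqueFinset_iff, isNClique_compl]

theorem card_cliqueFinset_two [DecidableEq V] : #(G.cliqueFinset 2) = #G.edgeFinset := by
  refine (card_nbij Sym2.toFinset ?_ ?_ ?_).symm
  · rintro ⟨u, v⟩ h
    have huv : G.Adj u v := by simpa using h
    simp [Sym2.toFinset_mk_eq, isNClique_iff, huv, huv.ne]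
  · rintro e - f - h
    ext v
    rw [← Sym2.mem_toFinset, ← Sym2.mem_toFinset, h]
  · intro s hs
    obtain ⟨hclique, hcard⟩ := (isNClique_iff G).1 ((mem_cliqueFinset_iff).1 hs)
    obtain ⟨u, v, huv, rfl⟩ := card_eq_two.1 hcard
    exact ⟨s(u, v), by simpa [huv] using hclique, Sym2.toFinset_mk_eq⟩

theorem two_mul_indepCount_two :
    (2 * indepCount G 2 : ℤ) =
      Fintype.card V ^ 2 - Fintype.card V - 2 * #G.edgeFinset := by
  classical
  have hdeg (v : V) : (Gᶜ.degree v : ℤ) = Fintype.card V - 1 - G.degree v := by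
    have := G.degree_lt_card_verts v
    rw [degree_compl]
    omega
  rw [indepCount_eq_card_cliqueFinset_compl, card_cliqueFinset_two,
    ← sum_degree_eq_two_mul_card_edgeFinset, ← sum_degree_eq_two_mul_card_edgeFinset]
  simp only [hdeg, sum_sub_distrib, sum_const, card_univ, nsmul_eq_mul]
  ring

variable [DecidableEq V]

theorem card_filter_triple_eq {a b c : V} (hab : a ≠ b) (hac : a ≠ c) (hbc : b ≠ c) :
    #{x : V × V × V | ({x.1, x.2.1, x.2.2} : Finset V) = {a, b, c}} = 6 := by
  trans #({(a, b, c), (a, c, b), (b, a, c), (b, c, a), (c, a, b), (c, b, a)} :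
    Finset (V × V × V))
  · congr 1 with ⟨u, v, w⟩
    simp only [mem_filter, mem_univ, true_and, mem_insert, mem_singleton, Prod.mk.injEq]
    constructor
    · intro h
      simp only [Finset.ext_iff, mem_insert, mem_singleton] at h
      have ha := h a
      have hb := h b
      have hc := h c
      grind
    · rintro (⟨rfl, rfl, rfl⟩ | ⟨rfl, rfl, rfl⟩ | ⟨rfl, rfl, rfl⟩ | ⟨rfl, rfl, rfl⟩ |
        ⟨rfl, rfl, rfl⟩ | ⟨rfl, rfl, rfl⟩) <;> grind
  · simp [hab, hac, hbc, hab.symm, hac.symm, hbc.symm]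

theorem trace_adjMatrix_pow_three :
    trace (G.adjMatrix ℤ ^ 3) = (6 * #(G.cliqueFinset 3) : ℤ) := by
  let T : Finset (V × V × V) := {x | G.Adj x.1 x.2.1 ∧ G.Adj x.1 x.2.2 ∧ G.Adj x.2.1 x.2.2}
  let support (x : V × V × V) : Finset V := {x.1, x.2.1, x.2.2}
  have trace_eq : trace (G.adjMatrix ℤ ^ 3) = (#T : ℤ) := by
    simp only [T, trace, Matrix.diag, pow_three, Matrix.mul_apply, adjMatrix_apply, ← sum_boole,
      Fintype.sum_prod_type, mul_sum]
    refine sum_congr rfl fun u _ ↦ sum_congr rfl fun v _ ↦ sum_congr rfl fun w _ ↦ ?_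
    simp only [G.adj_comm w u]
    split_ifs <;> simp_all
  have fiber_card (s) (hs : s ∈ G.cliqueFinset 3) : #{x ∈ T | support x = s} = 6 := by
    obtain ⟨a, b, c, hab, hac, hbc, rfl⟩ := is3Clique_iff.1 ((mem_cliqueFinset_iff).1 hs)
    rw [← card_filter_triple_eq hab.ne hac.ne hbc.ne, filter_filter]
    congr 1 with x
    simp only [mem_filter, mem_univ, true_and]
    refine and_iff_right_of_imp fun hx ↦ ?_
    rwa [← is3Clique_triple_iff, show {x.1, x.2.1, x.2.2} = _ from hx, ← mem_cliqueFinset_iff]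
  have maps_to (x) (hx : x ∈ T) : support x ∈ G.cliqueFinset 3 :=
    (mem_cliqueFinset_iff).2 (is3Clique_triple_iff.2 (mem_filter.1 hx).2)
  rw [trace_eq, card_eq_sum_card_fiberwise maps_to, sum_congr rfl fiber_card]
  simp [mul_comm]

theorem trace_ones_sub_pow_three (M : Matrix V V ℤ) :
    trace ((vecMulVec 1 1 - M) ^ 3) = (Fintype.card V : ℤ) ^ 3 -
      3 * Fintype.card V * (1 ⬝ᵥ M *ᵥ 1) + 3 * (1 ⬝ᵥ (M * M) *ᵥ 1) - trace (M ^ 3) := by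
  set J : Matrix V V ℤ := vecMulVec 1 1
  have expand : (J - M) ^ 3 = J * J * J - (J * J * M + J * M * J + M * J * J) +
      (J * M * M + M * J * M + M * M * J) - M ^ 3 := by noncomm_ring
  have trace_mul (N : Matrix V V ℤ) : trace (N * J) = 1 ⬝ᵥ N *ᵥ 1 := by
    rw [mul_vecMulVec, trace_vecMulVec, dotProduct_comm]
  have J_mul_J : J * J = (Fintype.card V : ℤ) • J := by
    simp only [J, vecMulVec_mul_vecMulVec, one_dotProduct_one, vecMulVec_smul]
  have trace_J : trace J = Fintype.card V := by
    simp only [J, trace_vecMulVec, one_dotProduct_one]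
  rw [expand, trace_sub, trace_add, trace_sub, trace_add, trace_add, trace_add, trace_add,
    trace_mul_cycle J M M, trace_mul_cycle M J M, trace_mul_cycle J M J, trace_mul_cycle J J M]
  simp only [mul_assoc M J J, J_mul_J, smul_mul_assoc, mul_smul_comm, trace_smul, trace_mul,
    trace_J, smul_eq_mul]
  ring

theorem six_mul_indepCount_three :
    (6 * indepCount G 3 : ℤ) = Fintype.card V ^ 3 - 3 * Fintype.card V ^ 2 + 2 * Fintype.card V -
      3 * Fintype.card V * ∑ v, (G.degree v : ℤ) + 3 * ∑ v, (G.degree v : ℤ) +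
      3 * ∑ v, (G.degree v : ℤ) ^ 2 - 6 * #(G.cliqueFinset 3) := by
  have compl_eq : Gᶜ.adjMatrix ℤ = vecMulVec 1 1 - (1 + G.adjMatrix ℤ) := by
    ext u v
    obtain rfl | huv := eq_or_ne u v
    · simp
    · by_cases h : G.Adj u v <;> simp [one_apply, huv, h]
  have row_sum : (1 + G.adjMatrix ℤ) *ᵥ 1 = fun v ↦ 1 + (G.degree v : ℤ) := by
    ext v
    simp [add_mulVec, adjMatrix_mulVec_apply]
  have col_sum : 1 ᵥ* (1 + G.adjMatrix ℤ) = fun v ↦ 1 + (G.degree v : ℤ) := by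
    rw [← row_sum, ← vecMul_transpose, transpose_add, transpose_one, transpose_adjMatrix]
  have trace_sq : trace (G.adjMatrix ℤ * G.adjMatrix ℤ) = ∑ v, (G.degree v : ℤ) := by
    simp only [trace, Matrix.diag, adjMatrix_mul_self_apply_self]
  have trace_cube : trace ((1 + G.adjMatrix ℤ) ^ 3) =
      Fintype.card V + 3 * ∑ v, (G.degree v : ℤ) + 6 * #(G.cliqueFinset 3) := by
    rw [show (1 + G.adjMatrix ℤ) ^ 3 = 1 + 3 • G.adjMatrix ℤ +
      3 • (G.adjMatrix ℤ * G.adjMatrix ℤ) + G.adjMatrix ℤ ^ 3 by noncomm_ring]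
    simp only [trace_add, trace_one, trace_smul, trace_adjMatrix, trace_sq,
      trace_adjMatrix_pow_three]
    ring
  have dot_eq : (fun v ↦ 1 + (G.degree v : ℤ)) ⬝ᵥ (fun v ↦ 1 + (G.degree v : ℤ)) =
      Fintype.card V + 2 * ∑ v, (G.degree v : ℤ) + ∑ v, (G.degree v : ℤ) ^ 2 := by
    simp [dotProduct, ← pow_two, add_sq, sum_add_distrib, mul_sum]
  rw [indepCount_eq_card_cliqueFinset_compl, ← trace_adjMatrix_pow_three, compl_eq,
    trace_ones_sub_pow_three, trace_cube, ← mulVec_mulVec, dotProduct_mulVec _ _ (_ *ᵥ _),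
    col_sum, row_sum, dot_eq, one_dotProduct, sum_add_distrib]
  simp only [sum_const, card_univ, nsmul_eq_mul, mul_one]
  ring

end LowCoefficients

section PowerSums

variable {R : Type*} [CommRing R]

/-- Newton's expression for `∑ αᵢ ^ 2` in terms of the coefficients of `P = ∏ (1 + αᵢ X)`. -/
def powerSumTwo (P : R[X]) : R :=
  P.coeff 1 ^ 2 - 2 * P.coeff 2

/-- Newton's expression for `∑ αᵢ ^ 3` in terms of the coefficients of `P = ∏ (1 + αᵢ X)`. -/
def powerSumThree (P : R[X]) : R :=
  P.coeff 1 ^ 3 - 3 * P.coeff 1 * P.coeff 2 + 3 * P.coeff 3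

variable {P Q : R[X]}

theorem coeff_one_mul (hP : P.coeff 0 = 1) (hQ : Q.coeff 0 = 1) :
    (P * Q).coeff 1 = P.coeff 1 + Q.coeff 1 := by
  rw [mul_coeff_one, hP, hQ, one_mul, mul_one, add_comm]

theorem coeff_two_mul (hP : P.coeff 0 = 1) (hQ : Q.coeff 0 = 1) :
    (P * Q).coeff 2 = Q.coeff 2 + (P.coeff 1 * Q.coeff 1 + P.coeff 2) := by
  simp [coeff_mul, Nat.antidiagonal_succ, hP, hQ]

theorem coeff_three_mul (hP : P.coeff 0 = 1) (hQ : Q.coeff 0 = 1) :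
    (P * Q).coeff 3 =
      Q.coeff 3 + (P.coeff 1 * Q.coeff 2 + (P.coeff 2 * Q.coeff 1 + P.coeff 3)) := by
  simp [coeff_mul, Nat.antidiagonal_succ, hP, hQ]

theorem powerSumTwo_mul (hP : P.coeff 0 = 1) (hQ : Q.coeff 0 = 1) :
    powerSumTwo (P * Q) = powerSumTwo P + powerSumTwo Q := by
  simp only [powerSumTwo, coeff_one_mul hP hQ, coeff_two_mul hP hQ]
  ring

theorem powerSumThree_mul (hP : P.coeff 0 = 1) (hQ : Q.coeff 0 = 1) :
    powerSumThree (P * Q) = powerSumThree P + powerSumThree Q := by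
  simp only [powerSumThree, coeff_one_mul hP hQ, coeff_two_mul hP hQ, coeff_three_mul hP hQ]
  ring

theorem dvd_powerSumTwo {a : R} (h : ∀ j ≠ 0, a ∣ P.coeff j) :
    a ∣ powerSumTwo P :=
  ((h 1 one_ne_zero).trans (dvd_pow_self _ two_ne_zero)).sub ((h 2 two_ne_zero).mul_left _)

theorem dvd_powerSumThree {a : R}
    (h : ∀ j ≠ 0, a ∣ P.coeff j) : a ∣ powerSumThree P :=
  (((h 1 one_ne_zero).trans (dvd_pow_self _ three_ne_zero)).sub ((h 2 two_ne_zero).mul_left _)).add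
    ((h 3 three_ne_zero).mul_left _)

theorem apply_prod_eq_sum_apply {ι M : Type*} [AddCommMonoid M] (φ : R[X] → M) (hφ_one : φ 1 = 0)
    (hφ_mul : ∀ P Q, P.coeff 0 = 1 → Q.coeff 0 = 1 → φ (P * Q) = φ P + φ Q)
    (s : Finset ι) (f : ι → R[X]) (hf : ∀ i ∈ s, (f i).coeff 0 = 1) :
    φ (∏ i ∈ s, f i) = ∑ i ∈ s, φ (f i) := by
  classical
  induction s using Finset.induction_on with
  | empty => simpa using hφ_one
  | insert i s hi ih =>
    have hs : (∏ j ∈ s, f j).coeff 0 = 1 := by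
      rw [coeff_zero_prod]
      exact prod_eq_one fun j hj ↦ hf j (mem_insert_of_mem hj)
    rw [prod_insert hi, sum_insert hi, hφ_mul _ _ (hf i (mem_insert_self i s)) hs,
      ih fun j hj ↦ hf j (mem_insert_of_mem hj)]

end PowerSums

section Excess

variable {V : Type*} [Fintype V] (G : SimpleGraph V) [DecidableRel G.Adj]

/-- The number of edges in excess of the number of vertices; it vanishes for a connected graph
exactly when the graph is unicyclic. -/
def edgeExcess : ℤ :=
  #G.edgeFinset - Fintype.card V

theorem two_mul_edgeExcess :
    2 * edgeExcess G = powerSumTwo (indepPoly G) - 3 * (indepPoly G).coeff 1 := by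
  simp only [edgeExcess, powerSumTwo, coeff_indepPoly, two_mul_indepCount_two, indepCount_one]
  ring

variable {G} {W : Type*} [Fintype W] {H : SimpleGraph W} [DecidableRel H.Adj]

theorem edgeExcess_eq_of_indepPoly_eq (h : indepPoly G = indepPoly H) :
    edgeExcess G = edgeExcess H :=
  mul_left_cancel₀ two_ne_zero (by rw [two_mul_edgeExcess, two_mul_edgeExcess, h])

theorem dvd_edgeExcess {p : ℤ} (hp : IsCoprime p 2)
    (h : ∀ j ≠ 0, p ∣ (indepPoly G).coeff j) : p ∣ edgeExcess G := by
  refine hp.dvd_of_dvd_mul_left ?_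
  rw [two_mul_edgeExcess]
  exact (dvd_powerSumTwo h).sub ((h 1 one_ne_zero).mul_left _)

variable [DecidableEq V] [DecidableEq W]

/-- The number of cherries (paths on three vertices, induced or not) in excess of the number of
vertices and triangles. -/
def cherryExcess (G : SimpleGraph V) [DecidableRel G.Adj] : ℤ :=
  ∑ v, ((G.degree v).choose 2 : ℤ) - Fintype.card V - #(G.cliqueFinset 3)

theorem three_mul_cherryExcess (G : SimpleGraph V) [DecidableRel G.Adj] :
    3 * cherryExcess G =
      powerSumThree (indepPoly G) - 3 * powerSumTwo (indepPoly G) - (indepPoly G).coeff 1 := by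
  have cherries := two_mul_sum_choose_degree G
  have h2 := two_mul_indepCount_two G
  have h3 := six_mul_indepCount_three G
  simp only [cherryExcess, powerSumThree, powerSumTwo, coeff_indepPoly, indepCount_one]
  rw [sum_degree_eq_two_mul_card_edgeFinset] at h3
  refine mul_left_cancel₀ (two_ne_zero (α := ℤ)) ?_
  linear_combination 3 * cherries - h3 + (3 * Fintype.card V - 6) * h2

theorem cherryExcess_eq_of_indepPoly_eq (h : indepPoly G = indepPoly H) :
    cherryExcess G = cherryExcess H :=
  mul_left_cancel₀ three_ne_zero (by rw [three_mul_cherryExcess, three_mul_cherryExcess, h])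

theorem dvd_cherryExcess {p : ℤ} (hp : IsCoprime p 3)
    (h : ∀ j ≠ 0, p ∣ (indepPoly G).coeff j) : p ∣ cherryExcess G := by
  refine hp.dvd_of_dvd_mul_left ?_
  rw [three_mul_cherryExcess]
  exact ((dvd_powerSumThree h).sub ((dvd_powerSumTwo h).mul_left _)).sub (h 1 one_ne_zero)

end Excess

section Divisibility

theorem dvd_card_of_forall_apply_ne {α : Type*} [Finite α] {f : Function.End α} {p m : ℕ}
    (hp : p.Prime) (hf : f ^ p ^ m = 1) (hne : ∀ x, f x ≠ x) : p ∣ Nat.card α := by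
  classical
  have : Fact p.Prime := ⟨hp⟩
  have := Fintype.ofFinite α
  have no_fixed : IsEmpty f.fixedPoints := ⟨fun x ↦ hne x.1 x.2⟩
  rw [Nat.card_eq_fintype_card, ← Nat.modEq_zero_iff_dvd]
  convert Equiv.Perm.card_fixedPoints_modEq hf
  exact (Fintype.card_eq_zero_iff.2 no_fixed).symm

open scoped Pointwise in
theorem dvd_indepCount_of_forall_adj_iso {V : Type*} [Fintype V] {G : SimpleGraph V} {p m j : ℕ}
    (hp : p.Prime) (σ : G ≃g G) (hσ : σ ^ p ^ m = 1) (hadj : ∀ v, G.Adj v (σ v)) (hj : j ≠ 0) :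
    p ∣ indepCount G j := by
  classical
  let indepSets : SubMulAction (G ≃g G) (Finset V) :=
    { carrier := G.indepSetFinset j
      smul_mem' := fun τ s hs ↦ by
        rw [mem_coe, mem_indepSetFinset_iff, isNIndepSet_iff] at hs ⊢
        refine ⟨?_, by rw [card_smul_finset, hs.2]⟩
        rw [coe_smul_finset]
        rintro _ ⟨u, hu, rfl⟩ _ ⟨v, hv, rfl⟩ huv
        exact fun h ↦ hs.1 hu hv (ne_of_apply_ne _ huv) (τ.map_adj_iff.1 h) }
  have mem_iff (s : Finset V) : s ∈ indepSets ↔ G.IsNIndepSet j s := mem_indepSetFinset_iff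
  let f : Function.End indepSets := MulAction.toEndHom σ
  have hf : f ^ p ^ m = 1 := by
    rw [← map_pow, hσ, map_one]
  have no_fixed (s : indepSets) : f s ≠ s := by
    intro hfixed
    have hσs : σ • s.1 = s.1 := congrArg Subtype.val hfixed
    obtain ⟨hs_indep, hs_card⟩ := (mem_iff s.1).1 s.2
    obtain ⟨v, hv⟩ := card_ne_zero.1 (hs_card ▸ hj)
    have hσv : σ • v ∈ s.1 := hσs ▸ smul_mem_smul_finset hv
    exact hs_indep hv hσv (hadj v).ne (hadj v)
  rw [indepCount_eq_card_indepSetFinset, ← Nat.card_eq_finsetCard]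
  exact dvd_card_of_forall_apply_ne hp hf no_fixed

/-- The rotation `v ↦ v + 1` of a cycle. -/
def cycleGraphRotation (n : ℕ) : cycleGraph (n + 1) ≃g cycleGraph (n + 1) where
  toEquiv := Equiv.addRight 1
  map_rel_iff' := by simp [cycleGraph_eq_circulantGraph]

theorem cycleGraphRotation_pow_apply (n i : ℕ) (v : Fin (n + 1)) :
    (cycleGraphRotation n ^ i) v = v + i • 1 := by
  induction i with
  | zero => simp
  | succ i ih =>
    rw [pow_succ', RelIso.mul_apply, ih]
    simp [succ_nsmul, cycleGraphRotation, add_assoc]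

theorem prime_dvd_indepCount_cycleGraph {p k j : ℕ} (hp : p.Prime) (hk : k ≠ 0) (hj : j ≠ 0) :
    p ∣ indepCount (cycleGraph (p ^ k)) j := by
  obtain ⟨n, hn⟩ : ∃ n, p ^ k = n + 1 + 1 := Nat.exists_eq_add_of_le' (Nat.one_lt_pow hk hp.one_lt)
  have rotation_pow : cycleGraphRotation (n + 1) ^ p ^ k = 1 := by
    ext v : 1
    rw [cycleGraphRotation_pow_apply, hn, RelIso.one_apply]
    simpa using card_nsmul_eq_zero' (x := (1 : Fin (n + 1 + 1)))
  rw [hn]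
  refine dvd_indepCount_of_forall_adj_iso hp _ rotation_pow (fun v ↦ ?_) hj
  simp [cycleGraph_eq_circulantGraph, cycleGraphRotation]

theorem dvd_coeff_of_dvd {p : ℕ} (hp : p.Prime) {P Q : ℤ[X]} (hQP : Q ∣ P)
    (hP₀ : ¬(p : ℤ) ∣ P.coeff 0) (hP : ∀ j ≠ 0, (p : ℤ) ∣ P.coeff j) {j : ℕ} (hj : j ≠ 0) :
    (p : ℤ) ∣ Q.coeff j := by
  have : Fact p.Prime := ⟨hp⟩
  let π := Int.castRingHom (ZMod p)
  have map_P : P.map π = C (π (P.coeff 0)) := by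
    ext j
    rw [coeff_map, coeff_C]
    split_ifs with hj
    · rw [hj]
    · simpa [π, ZMod.intCast_zmod_eq_zero_iff_dvd] using hP j hj
  have isUnit_P : IsUnit (P.map π) := by
    rw [map_P, isUnit_C, isUnit_iff_ne_zero]
    simpa [π, ZMod.intCast_zmod_eq_zero_iff_dvd] using hP₀
  have natDegree_Q : (Q.map π).natDegree = 0 :=
    natDegree_eq_zero_of_isUnit (isUnit_of_dvd_unit (map_dvd (mapRingHom π) hQP) isUnit_P)
  rw [← ZMod.intCast_zmod_eq_zero_iff_dvd, ← eq_intCast π, ← coeff_map]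
  exact coeff_eq_zero_of_natDegree_lt (natDegree_Q ▸ Nat.pos_of_ne_zero hj)

theorem eq_zero_of_dvd_of_sum_eq_zero {ι : Type*} [Fintype ι] {a : ι → ℤ} {p : ℤ} (hp : 1 < p)
    (hdvd : ∀ i, p ∣ a i) (hlower : ∀ i, -1 ≤ a i) (hsum : ∑ i, a i = 0) (i : ι) : a i = 0 := by
  have nonneg (i : ι) : 0 ≤ a i := by
    by_contra! h
    have : a i = -1 := by linarith [hlower i]
    have := Int.le_of_dvd one_pos (by simpa [this] using hdvd i)
    omega
  exact (sum_eq_zero_iff_of_nonneg fun i _ ↦ nonneg i).1 hsum i (mem_univ i)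

end Divisibility

section Unicyclic

theorem not_isBridge_of_adj_of_adj {V : Type*} {G : SimpleGraph V} {x y w : V} (hxy : x ≠ y)
    (hxw : G.Adj x w) (hyw : G.Adj y w) : ¬G.IsBridge s(x, y) := by
  rw [isBridge_iff, not_not]
  have hxw' : (G.deleteEdges {s(x, y)}).Adj x w := by
    simp [deleteEdges_adj, hxw, hyw.ne', hxy]
  have hwy' : (G.deleteEdges {s(x, y)}).Adj w y := by
    simp [deleteEdges_adj, hyw.symm, hxw.ne', hxy.symm]
  exact hxw'.reachable.trans hwy'.reachable

variable {V : Type*} [Fintype V] {G : SimpleGraph V} [DecidableRel G.Adj]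

theorem neg_one_le_edgeExcess (hG : G.Connected) : -1 ≤ edgeExcess G := by
  have := hG.card_vert_le_card_edgeSet_add_one
  rw [Nat.card_eq_fintype_card, Nat.card_eq_fintype_card, ← edgeFinset_card] at this
  rw [edgeExcess]
  omega

theorem isAcyclic_deleteEdges_of_not_isBridge (hG : G.Connected) (he : edgeExcess G = 0)
    {x y : V} (hxy : G.Adj x y) (hbridge : ¬G.IsBridge s(x, y)) :
    (G.deleteEdges {s(x, y)}).IsAcyclic := by
  classical
  refine (isTree_iff_connected_and_card.2
    ⟨hG.connected_delete_edge_of_not_isBridge hbridge, ?_⟩).isAcyclic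
  rw [edgeSet_deleteEdges, Nat.card_coe_set_eq,
    Set.ncard_sdiff_singleton_add_one ((mem_edgeSet G).2 hxy), ← coe_edgeFinset,
    Set.ncard_coe_finset, Nat.card_eq_fintype_card]
  rw [edgeExcess] at he
  omega

theorem exists_not_isBridge_of_edgeExcess_eq_zero (he : edgeExcess G = 0) (hG : G.Connected) :
    ∃ x y, G.Adj x y ∧ ¬G.IsBridge s(x, y) := by
  by_contra! h
  have isTree : G.IsTree := ⟨hG, isAcyclic_iff_forall_adj_isBridge.2 h⟩
  have := isTree.card_edgeFinset
  rw [edgeExcess] at he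
  omega

theorem edgeExcess_of_forall_degree_eq_two (h : ∀ v, G.degree v = 2) : edgeExcess G = 0 := by
  have := G.sum_degrees_eq_twice_card_edges
  simp only [h, sum_const, card_univ, smul_eq_mul] at this
  rw [edgeExcess]
  omega

theorem three_le_card_of_edgeExcess_eq_zero [Nonempty V] (he : edgeExcess G = 0) :
    3 ≤ Fintype.card V := by
  have hle := G.card_edgeFinset_le_card_choose_two
  have hpos : 0 < Fintype.card V := Fintype.card_pos
  rw [edgeExcess, sub_eq_zero, Nat.cast_inj] at he
  rw [he] at hle
  by_contra! hlt
  generalize Fintype.card V = n at *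
  interval_cases n <;> simp at hle

variable [DecidableEq V]

theorem card_cliqueFinset_three_le_one (hG : G.Connected) (he : edgeExcess G = 0) :
    #(G.cliqueFinset 3) ≤ 1 := by
  refine card_le_one.2 fun s hs t ht ↦ ?_
  rw [mem_cliqueFinset_iff] at hs ht
  refine eq_of_subset_of_card_le (fun x hx ↦ ?_) (by rw [hs.card_eq, ht.card_eq])
  by_contra hxt
  obtain ⟨y, w, hyw, hs_erase⟩ : ∃ y w, y ≠ w ∧ s.erase x = {y, w} :=
    card_eq_two.1 (by rw [card_erase_of_mem hx, hs.card_eq])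
  obtain ⟨hyx, hy⟩ := mem_erase.1 (hs_erase ▸ mem_insert_self y {w})
  obtain ⟨hwx, hw⟩ := mem_erase.1 (hs_erase ▸ mem_insert_of_mem (mem_singleton_self w))
  have hxy : ¬G.IsBridge s(x, y) :=
    not_isBridge_of_adj_of_adj hyx.symm (hs.isClique hx hw hwx.symm) (hs.isClique hy hw hyw)
  refine (isAcyclic_deleteEdges_of_not_isBridge hG he (hs.isClique hx hy hyx.symm) hxy).cliqueFree
    le_rfl t ⟨fun u hu v hv huv ↦ deleteEdges_adj.2 ⟨ht.isClique hu hv huv, ?_⟩, ht.card_eq⟩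
  rw [Set.mem_singleton_iff, Sym2.eq_iff]
  rintro (⟨rfl, -⟩ | ⟨-, rfl⟩)
  exacts [hxt hu, hxt hv]

theorem two_mul_cherryExcess (he : edgeExcess G = 0) :
    2 * cherryExcess G =
      ∑ v, ((G.degree v : ℤ) - 1) * (G.degree v - 2) - 2 * #(G.cliqueFinset 3) := by
  have expand : ∑ v, ((G.degree v : ℤ) - 1) * (G.degree v - 2) =
      ∑ v, (G.degree v : ℤ) ^ 2 - 3 * ∑ v, (G.degree v : ℤ) + 2 * Fintype.card V := by
    rw [mul_sum, ← sum_sub_distrib, ← card_univ, card_eq_sum_ones, Nat.cast_sum, mul_sum,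
      ← sum_add_distrib]
    exact sum_congr rfl fun v _ ↦ by push_cast; ring
  rw [edgeExcess] at he
  rw [cherryExcess, expand, sum_degree_eq_two_mul_card_edgeFinset]
  linear_combination two_mul_sum_choose_degree G + 4 * he

theorem sub_one_mul_sub_two_nonneg (d : ℤ) : 0 ≤ (d - 1) * (d - 2) := by
  obtain h | h := le_or_gt d 1
  · exact mul_nonneg_of_nonpos_of_nonpos (by omega) (by omega)
  · exact mul_nonneg (by omega) (by omega)

theorem neg_one_le_cherryExcess (hG : G.Connected) (he : edgeExcess G = 0) :
    -1 ≤ cherryExcess G := by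
  have triangles := card_cliqueFinset_three_le_one hG he
  have degrees : 0 ≤ ∑ v, ((G.degree v : ℤ) - 1) * (G.degree v - 2) :=
    sum_nonneg fun v _ ↦ sub_one_mul_sub_two_nonneg _
  have := two_mul_cherryExcess he
  omega

end Unicyclic

section Path

theorem cycleGraph_eq_pathGraph_sup_edge {n : ℕ} {a b : Fin n} (ha : (a : ℕ) = 0)
    (hb : (b : ℕ) + 1 = n) : cycleGraph n = pathGraph n ⊔ edge a b := by
  ext u v
  rw [cycleGraph_adj', sup_adj, pathGraph_adj, edge_adj]
  simp only [Fin.ext_iff, Fin.val_sub, ne_eq, ha]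
  rcases lt_trichotomy (u : ℕ) v with h | h | h
  · rw [Nat.mod_eq_of_lt (show n - v + u < n by omega),
      show n - u + v = v - u + n by omega, Nat.add_mod_right, Nat.mod_eq_of_lt (by omega)]
    omega
  · rw [h, Nat.sub_add_cancel v.isLt.le, Nat.mod_self]
    omega
  · rw [Nat.mod_eq_of_lt (show n - u + v < n by omega),
      show n - v + u = u - v + n by omega, Nat.add_mod_right, Nat.mod_eq_of_lt (by omega)]
    omega

theorem dGraph_eq_pathGraph_sup_edge {n : ℕ} {a b : Fin n} (ha : (a : ℕ) = 0)
    (hb : (b : ℕ) = 2) : dGraph n = pathGraph n ⊔ edge a b := by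
  ext u v
  rw [dGraph, fromRel_adj, sup_adj, pathGraph_adj, edge_adj]
  simp only [Fin.ext_iff, ha, hb, ne_eq]
  omega

variable {V : Type*} {G : SimpleGraph V} {ℓ : V}

theorem exists_adj_dist_eq (hG : G.Connected) {v : V} {k : ℕ} (hv : G.dist ℓ v = k + 1) :
    ∃ u, G.Adj u v ∧ G.dist ℓ u = k := by
  obtain ⟨W, hW⟩ := hG.exists_walk_length_eq_dist v ℓ
  rw [dist_comm, hv] at hW
  cases W with
  | nil => simp at hW
  | @cons _ u _ hvu W =>
    rw [Walk.length_cons, Nat.add_right_cancel_iff] at hW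
    refine ⟨u, hvu.symm, le_antisymm (hW ▸ dist_comm (G := G) ▸ dist_le W) ?_⟩
    have := hG.dist_triangle (u := ℓ) (v := u) (w := v)
    rw [dist_eq_one_iff_adj.2 hvu.symm] at this
    omega

variable [Fintype V] [DecidableRel G.Adj]

theorem dist_injective_of_degree_le_two (hG : G.Connected) (hdeg : ∀ v, G.degree v ≤ 2)
    (hℓ : G.degree ℓ ≤ 1) : Function.Injective (G.dist ℓ) := by
  classical
  suffices ∀ k v w, G.dist ℓ v = k → G.dist ℓ w = k → v = w from
    fun v w h ↦ this _ v w h rfl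
  intro k
  induction k with
  | zero =>
    intro v w hv hw
    rw [← hG.dist_eq_zero_iff.1 hv, hG.dist_eq_zero_iff.1 hw]
  | succ k ih =>
    intro v w hv hw
    obtain ⟨u, huv, hu⟩ := exists_adj_dist_eq hG hv
    obtain ⟨u', huw, hu'⟩ := exists_adj_dist_eq hG hw
    obtain rfl := ih u u' hu hu'
    rw [← mem_neighborFinset] at huv huw
    cases k with
    | zero =>
      rw [← hG.dist_eq_zero_iff.1 hu] at huv huw
      exact card_le_one.1 hℓ v huv w huw
    | succ k =>
      obtain ⟨t, htu, ht⟩ := exists_adj_dist_eq hG hu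
      by_contra hvw
      refine (two_lt_card_iff.2 ⟨t, v, w, (mem_neighborFinset ..).2 htu.symm, huv, huw, ?_, ?_,
        hvw⟩).not_ge (hdeg u)
      all_goals rintro rfl; omega

theorem exists_iso_pathGraph (hG : G.Connected) (hdeg : ∀ v, G.degree v ≤ 2)
    (hℓ : G.degree ℓ ≤ 1) :
    ∃ φ : G ≃g pathGraph (Fintype.card V), (φ ℓ : ℕ) = 0 := by
  have dist_injective := dist_injective_of_degree_le_two hG hdeg hℓ
  have dist_lt (v : V) : G.dist ℓ v < Fintype.card V := by
    obtain ⟨W, hW, hlength⟩ := hG.exists_path_of_dist ℓ v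
    exact hlength ▸ hW.length_lt
  have adj_of_dist_eq {v w : V} (h : G.dist ℓ v + 1 = G.dist ℓ w) : G.Adj v w := by
    obtain ⟨u, huw, hu⟩ := exists_adj_dist_eq hG h.symm
    exact dist_injective hu ▸ huw
  have bijective : Function.Bijective fun v ↦ (⟨G.dist ℓ v, dist_lt v⟩ : Fin (Fintype.card V)) :=
    (Fintype.bijective_iff_injective_and_card _).2
      ⟨fun v w h ↦ dist_injective (Fin.ext_iff.1 h), (Fintype.card_fin _).symm⟩
  refine ⟨⟨.ofBijective _ bijective, fun {v w} ↦ ?_⟩, dist_self⟩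
  rw [pathGraph_adj]
  refine ⟨fun h ↦ h.elim adj_of_dist_eq fun h ↦ (adj_of_dist_eq h).symm, fun h ↦ ?_⟩
  have := h.diff_dist_adj (u := ℓ)
  have := dist_injective.ne h.ne
  simp only [Equiv.ofBijective_apply]
  omega

theorem val_eq_zero_or_val_add_one_eq_of_degree_le_one {n : ℕ} (φ : G ≃g pathGraph n) {v : V}
    (hv : G.degree v ≤ 1) : (φ v : ℕ) = 0 ∨ (φ v : ℕ) + 1 = n := by
  by_contra! h
  have hlt := (φ v).isLt
  let a : Fin n := ⟨φ v - 1, by omega⟩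
  let b : Fin n := ⟨φ v + 1, by omega⟩
  have ha : φ.symm a ∈ G.neighborFinset v := by
    rw [mem_neighborFinset, ← φ.map_adj_iff, φ.apply_symm_apply, pathGraph_adj]
    exact Or.inr (Nat.sub_add_cancel (Nat.pos_of_ne_zero h.1))
  have hb : φ.symm b ∈ G.neighborFinset v := by
    rw [mem_neighborFinset, ← φ.map_adj_iff, φ.apply_symm_apply, pathGraph_adj]
    exact Or.inl rfl
  have hab : (φ v - 1 : ℕ) = φ v + 1 :=
    Fin.ext_iff.1 (φ.symm.injective (card_le_one.1 hv _ ha _ hb))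
  omega

end Path

section Classification

variable {V : Type*} {G : SimpleGraph V} {x w : V}

theorem nonempty_iso_sup_edge_of_deleteEdges_iso {W : Type*} {H : SimpleGraph W}
    (hxw : G.Adj x w) (φ : G.deleteEdges {s(x, w)} ≃g H) :
    Nonempty (G ≃g H ⊔ edge (φ x) (φ w)) := by
  refine ⟨φ.toEquiv, fun {u v} ↦ ?_⟩
  change (H ⊔ edge (φ x) (φ w)).Adj (φ u) (φ v) ↔ _
  rw [sup_adj, φ.map_adj_iff, edge_adj, φ.injective.eq_iff, φ.injective.eq_iff,
    φ.injective.eq_iff, φ.injective.eq_iff, φ.injective.ne_iff, deleteEdges_adj,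
    Set.mem_singleton_iff, Sym2.eq_iff]
  have h_edge : (u = x ∧ v = w ∨ u = w ∧ v = x) → G.Adj u v := by
    rintro (⟨rfl, rfl⟩ | ⟨rfl, rfl⟩)
    exacts [hxw, hxw.symm]
  have := G.ne_of_adj (a := u) (b := v)
  tauto

variable [Fintype V] [DecidableRel G.Adj]

theorem sub_one_mul_sub_two_eq_zero_iff (d : ℕ) :
    ((d : ℤ) - 1) * (d - 2) = 0 ↔ d = 1 ∨ d = 2 := by
  rw [mul_eq_zero]
  omega

theorem degree_eq_two_of_sum_eq_zero (he : edgeExcess G = 0)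
    (hsum : ∑ v, ((G.degree v : ℤ) - 1) * (G.degree v - 2) = 0) (v : V) : G.degree v = 2 := by
  have hle (u : V) : G.degree u ≤ 2 := by
    have := (sub_one_mul_sub_two_eq_zero_iff _).1 <|
      (sum_eq_zero_iff_of_nonneg fun u _ ↦ sub_one_mul_sub_two_nonneg _).1 hsum u (mem_univ u)
    omega
  refine (sum_eq_sum_iff_of_le fun u _ ↦ hle u).1 ?_ v (mem_univ v)
  rw [G.sum_degrees_eq_twice_card_edges, sum_const, card_univ, smul_eq_mul]
  rw [edgeExcess] at he
  omega

theorem degree_deleteEdges_add_one [DecidableEq V] (hxw : G.Adj x w) :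
    (G.deleteEdges {s(x, w)}).degree x + 1 = G.degree x := by
  have : (G.deleteEdges {s(x, w)}).neighborFinset x = (G.neighborFinset x).erase w := by
    ext v
    rw [mem_neighborFinset, deleteEdges_adj, mem_erase, mem_neighborFinset, and_comm,
      Set.mem_singleton_iff, Sym2.congr_right, ne_eq]
  rw [← card_neighborFinset_eq_degree, this,
    card_erase_add_one ((mem_neighborFinset ..).2 hxw), card_neighborFinset_eq_degree]

theorem exists_deleteEdges_iso_pathGraph (hG : G.Connected) (hxw : G.Adj x w)
    (hbridge : ¬G.IsBridge s(x, w)) (hx : G.degree x = 2) (hw : G.degree w ≤ 3)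
    (hdeg : ∀ v, v ≠ w → G.degree v ≤ 2) :
    ∃ φ : G.deleteEdges {s(x, w)} ≃g pathGraph (Fintype.card V), (φ x : ℕ) = 0 := by
  classical
  refine exists_iso_pathGraph (hG.connected_delete_edge_of_not_isBridge hbridge) (fun v ↦ ?_) ?_
  · obtain rfl | hvw := eq_or_ne v w
    · have := degree_deleteEdges_add_one hxw.symm
      rw [Sym2.eq_swap] at this
      omega
    · exact (degree_le_of_le (deleteEdges_le _)).trans (hdeg v hvw)
  · have := degree_deleteEdges_add_one hxw
    omega

theorem nonempty_iso_cycleGraph (hG : G.Connected) (hdeg : ∀ v, G.degree v = 2) :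
    Nonempty (G ≃g cycleGraph (Fintype.card V)) := by
  classical
  obtain ⟨x, w, hxw, hbridge⟩ :=
    exists_not_isBridge_of_edgeExcess_eq_zero (edgeExcess_of_forall_degree_eq_two hdeg) hG
  obtain ⟨φ, hφx⟩ := exists_deleteEdges_iso_pathGraph hG hxw hbridge (hdeg x)
    (by rw [hdeg]; norm_num) fun v _ ↦ (hdeg v).le
  have hw : (G.deleteEdges {s(x, w)}).degree w ≤ 1 := by
    have := degree_deleteEdges_add_one hxw.symm
    rw [Sym2.eq_swap, hdeg] at this
    omega
  have hφw := val_eq_zero_or_val_add_one_eq_of_degree_le_one φ hw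
  have hne : (φ x : ℕ) ≠ φ w := Fin.val_injective.ne (φ.injective.ne hxw.ne)
  rw [cycleGraph_eq_pathGraph_sup_edge hφx (hφw.resolve_left (hφx ▸ hne.symm))]
  exact nonempty_iso_sup_edge_of_deleteEdges_iso hxw φ

theorem nonempty_iso_dGraph (hG : G.Connected) {y : V} (hxy : G.Adj x y) (hyw : G.Adj y w)
    (hxw : G.Adj x w) (hx : G.degree x = 2) (hw : G.degree w ≤ 3)
    (hdeg : ∀ v, v ≠ w → G.degree v ≤ 2) : Nonempty (G ≃g dGraph (Fintype.card V)) := by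
  classical
  obtain ⟨φ, hφx⟩ := exists_deleteEdges_iso_pathGraph hG hxw
    (not_isBridge_of_adj_of_adj hxw.ne hxy hyw.symm) hx hw hdeg
  have hxy' : (pathGraph (Fintype.card V)).Adj (φ x) (φ y) := by
    rw [φ.map_adj_iff, deleteEdges_adj, Set.mem_singleton_iff, Sym2.congr_right]
    exact ⟨hxy, hyw.ne⟩
  have hyw' : (pathGraph (Fintype.card V)).Adj (φ y) (φ w) := by
    rw [φ.map_adj_iff, deleteEdges_adj, Set.mem_singleton_iff, Sym2.congr_left]
    exact ⟨hyw, hxy.ne'⟩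
  have hne : (φ x : ℕ) ≠ φ w := Fin.val_injective.ne (φ.injective.ne hxw.ne)
  rw [pathGraph_adj] at hxy' hyw'
  rw [dGraph_eq_pathGraph_sup_edge hφx (b := φ w) (by omega)]
  exact nonempty_iso_sup_edge_of_deleteEdges_iso hxw φ

theorem le_degree_add_one_of_isNClique {m : ℕ} {s : Finset V} (hs : G.IsNClique m s) {v : V}
    (hv : v ∈ s) : m ≤ G.degree v + 1 := by
  classical
  have hsub : s.erase v ⊆ G.neighborFinset v := fun t ht ↦ (mem_neighborFinset ..).2 <|
    hs.isClique hv (mem_of_mem_erase ht) (ne_of_mem_erase ht).symm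
  have := card_le_card hsub
  rw [card_erase_of_mem hv, hs.card_eq, card_neighborFinset_eq_degree] at this
  omega

theorem exists_mem_le_degree_of_isNClique {m : ℕ} {s : Finset V} (hG : G.Connected)
    (hs : G.IsNClique m s) (hm : m ≠ 0) {v : V} (hv : v ∉ s) : ∃ w ∈ s, m ≤ G.degree w := by
  classical
  obtain ⟨u, hu⟩ : s.Nonempty := by rwa [← card_ne_zero, hs.card_eq]
  obtain ⟨W⟩ := hG.preconnected u v
  obtain ⟨d, -, hfst, hsnd⟩ := W.exists_boundary_dart s hu hv
  refine ⟨d.fst, hfst, ?_⟩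
  have hsub : insert d.snd (s.erase d.fst) ⊆ G.neighborFinset d.fst :=
    insert_subset ((mem_neighborFinset ..).2 d.adj) fun t ht ↦ (mem_neighborFinset ..).2 <|
      hs.isClique hfst (mem_of_mem_erase ht) (ne_of_mem_erase ht).symm
  have := card_le_card hsub
  rwa [card_insert_of_notMem fun h ↦ hsnd (mem_of_mem_erase h), card_erase_add_one hfst,
    hs.card_eq] at this

theorem exists_three_le_degree_of_isNClique_three {s : Finset V} (hG : G.Connected)
    (hs : G.IsNClique 3 s) (hdeg : ∃ v, G.degree v ≠ 1 ∧ G.degree v ≠ 2) :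
    ∃ w ∈ s, 3 ≤ G.degree w := by
  obtain ⟨v, hv⟩ := hdeg
  by_cases hvs : v ∈ s
  · have := le_degree_add_one_of_isNClique hs hvs
    exact ⟨v, hvs, by omega⟩
  · exact exists_mem_le_degree_of_isNClique hG hs three_ne_zero hvs

theorem degree_le_of_sum_eq_two
    (hsum : ∑ v, ((G.degree v : ℤ) - 1) * (G.degree v - 2) = 2) (hw : 3 ≤ G.degree w) :
    G.degree w ≤ 3 ∧ ∀ v, v ≠ w → G.degree v ≤ 2 := by
  classical
  rw [← add_sum_erase _ _ (mem_univ w)] at hsum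
  have hrest : 0 ≤ ∑ v ∈ univ.erase w, ((G.degree v : ℤ) - 1) * (G.degree v - 2) :=
    sum_nonneg fun v _ ↦ sub_one_mul_sub_two_nonneg _
  have : (3 : ℤ) ≤ G.degree w := mod_cast hw
  refine ⟨by_contra fun hlt ↦ ?_, fun v hv ↦ ?_⟩
  · have : (4 : ℤ) ≤ G.degree w := mod_cast not_le.1 hlt
    nlinarith
  · have hzero : ∑ v ∈ univ.erase w, ((G.degree v : ℤ) - 1) * (G.degree v - 2) = 0 := by
      nlinarith
    have := (sub_one_mul_sub_two_eq_zero_iff _).1 <|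
      (sum_eq_zero_iff_of_nonneg fun u _ ↦ sub_one_mul_sub_two_nonneg _).1 hzero v
        (mem_erase.2 ⟨hv, mem_univ v⟩)
    omega

theorem nonempty_iso_dGraph_of_sum_eq_two {s : Finset V} (hG : G.Connected)
    (hs : G.IsNClique 3 s) (hsum : ∑ v, ((G.degree v : ℤ) - 1) * (G.degree v - 2) = 2) :
    Nonempty (G ≃g dGraph (Fintype.card V)) := by
  classical
  have hdeg : ∃ v, G.degree v ≠ 1 ∧ G.degree v ≠ 2 := by
    by_contra! h
    rw [sum_eq_zero fun v _ ↦ (sub_one_mul_sub_two_eq_zero_iff _).2 (or_iff_not_imp_left.2 (h v))]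
      at hsum
    exact two_ne_zero hsum.symm
  obtain ⟨w, hws, hw⟩ := exists_three_le_degree_of_isNClique_three hG hs hdeg
  obtain ⟨hw_le, hdeg_le⟩ := degree_le_of_sum_eq_two hsum hw
  obtain ⟨x, y, hxy, hs_erase⟩ : ∃ x y, x ≠ y ∧ s.erase w = {x, y} :=
    card_eq_two.1 (by rw [card_erase_of_mem hws, hs.card_eq])
  obtain ⟨hxw, hx⟩ := mem_erase.1 (hs_erase ▸ mem_insert_self x {y})
  obtain ⟨hyw, hy⟩ := mem_erase.1 (hs_erase ▸ mem_insert_of_mem (mem_singleton_self y))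
  exact nonempty_iso_dGraph hG (hs.isClique hx hy hxy) (hs.isClique hy hws hyw)
    (hs.isClique hx hws hxw)
    ((hdeg_le x hxw).antisymm (Nat.le_of_succ_le_succ (le_degree_add_one_of_isNClique hs hx)))
    hw_le hdeg_le

variable [DecidableEq V]

theorem nonempty_iso_cycleGraph_or_dGraph (hG : G.Connected) (he : edgeExcess G = 0)
    (hc : cherryExcess G = 0) :
    Nonempty (G ≃g cycleGraph (Fintype.card V)) ∨ Nonempty (G ≃g dGraph (Fintype.card V)) := by
  have hsum := two_mul_cherryExcess he
  rw [hc, mul_zero, eq_comm, sub_eq_zero] at hsum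
  obtain htriangle | ⟨s, hs⟩ := (G.cliqueFinset 3).eq_empty_or_nonempty
  · rw [htriangle, card_empty, Nat.cast_zero, mul_zero] at hsum
    exact Or.inl (nonempty_iso_cycleGraph hG (degree_eq_two_of_sum_eq_zero he hsum))
  · rw [(card_cliqueFinset_three_le_one hG he).antisymm (card_pos.2 ⟨s, hs⟩), Nat.cast_one,
      mul_one] at hsum
    exact Or.inr (nonempty_iso_dGraph_of_sum_eq_two hG (mem_cliqueFinset_iff.1 hs) hsum)

theorem cherryExcess_of_forall_degree_eq_two (hG : G.Connected) (hdeg : ∀ v, G.degree v = 2)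
    (hcard : 3 < Fintype.card V) : cherryExcess G = 0 := by
  have no_triangle : G.cliqueFinset 3 = ∅ := by
    refine eq_empty_of_forall_notMem fun s hs ↦ ?_
    rw [mem_cliqueFinset_iff] at hs
    obtain ⟨v, -, hv⟩ := exists_mem_notMem_of_card_lt_card (s := s) (t := univ) (by
      rwa [hs.card_eq, card_univ])
    obtain ⟨w, -, hw⟩ := exists_mem_le_degree_of_isNClique hG hs three_ne_zero hv
    rw [hdeg] at hw
    omega
  have := two_mul_cherryExcess (edgeExcess_of_forall_degree_eq_two hdeg)
  simpa [hdeg, no_triangle] using this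

theorem degree_cycleGraph {n : ℕ} (hn : 3 ≤ n) (v : Fin n) : (cycleGraph n).degree v = 2 := by
  obtain ⟨n, rfl⟩ := Nat.exists_eq_add_of_le' hn
  exact cycleGraph_degree_three_le

theorem edgeExcess_cycleGraph {n : ℕ} (hn : 3 ≤ n) : edgeExcess (cycleGraph n) = 0 :=
  edgeExcess_of_forall_degree_eq_two (degree_cycleGraph hn)

theorem cherryExcess_cycleGraph {n : ℕ} (hn : 3 < n) : cherryExcess (cycleGraph n) = 0 := by
  refine cherryExcess_of_forall_degree_eq_two ?_ (degree_cycleGraph hn.le) ?_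
  · obtain ⟨n, rfl⟩ := Nat.exists_eq_add_of_le' (Nat.one_le_of_lt hn)
    exact cycleGraph_connected
  · rwa [Fintype.card_fin]

end Classification

section Evaluation

theorem indepPoly_eq_pathGraph_add_X_mul_pathGraph {n m k : ℕ} {G : SimpleGraph (Fin (n + 1))}
    (hkm : k + m ≤ n) (hsucc : ∀ u v : Fin n, G.Adj u.succ v.succ ↔ (pathGraph n).Adj u v)
    (hzero : ∀ v : Fin n, ¬G.Adj 0 v.succ ↔ k ≤ v ∧ (v : ℕ) < k + m) :
    indepPoly G = indepPoly (pathGraph n) + X * indepPoly (pathGraph m) := by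
  let f : pathGraph n ↪g G := ⟨⟨Fin.succ, Fin.succ_injective n⟩, hsucc _ _⟩
  let shift (i : Fin m) : Fin n := ⟨k + i, by omega⟩
  let g : pathGraph m ↪g G := by
    refine ⟨⟨fun i ↦ (shift i).succ, fun i j h ↦ ?_⟩, fun {i j} ↦ ?_⟩
    · simpa [shift, Fin.ext_iff] using h
    · change G.Adj (shift i).succ (shift j).succ ↔ _
      rw [hsucc, pathGraph_adj, pathGraph_adj]
      simp only [shift]
      omega
  refine indepPoly_eq_add_X_mul 0 f (Fin.range_succ n) g (Set.ext fun v ↦ ?_)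
  rw [Set.mem_ofPred_eq, Set.mem_range]
  change (∃ i, (shift i).succ = v) ↔ _
  obtain rfl | ⟨v, rfl⟩ := v.eq_zero_or_eq_succ
  · simp [Fin.succ_ne_zero]
  · simp only [Fin.succ_inj, ne_eq, Fin.succ_ne_zero, not_false_eq_true, true_and, hzero]
    refine ⟨?_, fun ⟨hle, _⟩ ↦ ⟨⟨v - k, by omega⟩, Fin.ext (Nat.add_sub_of_le hle)⟩⟩
    rintro ⟨i, rfl⟩
    exact ⟨Nat.le_add_right _ _, Nat.add_lt_add_left i.isLt k⟩

theorem indepPoly_pathGraph_one : indepPoly (pathGraph 1) = 1 + X := by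
  rw [indepPoly_eq_pathGraph_add_X_mul_pathGraph (n := 0) (m := 0) (k := 0) le_rfl finZeroElim
    finZeroElim, indepPoly_of_isEmpty, mul_one]

theorem indepPoly_pathGraph_add_two (n : ℕ) :
    indepPoly (pathGraph (n + 2)) =
      indepPoly (pathGraph (n + 1)) + X * indepPoly (pathGraph n) := by
  refine indepPoly_eq_pathGraph_add_X_mul_pathGraph (k := 1) (by omega) (fun u v ↦ ?_) fun v ↦ ?_
  all_goals
    simp only [pathGraph_adj, Fin.val_succ, Fin.val_zero]
    omega

theorem indepPoly_cycleGraph_add_three (n : ℕ) :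
    indepPoly (cycleGraph (n + 3)) =
      indepPoly (pathGraph (n + 2)) + X * indepPoly (pathGraph n) := by
  rw [cycleGraph_eq_pathGraph_sup_edge (a := 0) (b := Fin.last (n + 2)) rfl rfl]
  refine indepPoly_eq_pathGraph_add_X_mul_pathGraph (k := 1) (by omega) (fun u v ↦ ?_) fun v ↦ ?_
  all_goals
    simp only [sup_adj, edge_adj, pathGraph_adj, ne_eq, Fin.ext_iff, Fin.val_succ, Fin.val_zero,
      Fin.val_last, true_and]
    omega

theorem indepPoly_dGraph_add_three (n : ℕ) :
    indepPoly (dGraph (n + 3)) =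
      indepPoly (pathGraph (n + 2)) + X * indepPoly (pathGraph n) := by
  rw [dGraph_eq_pathGraph_sup_edge (a := 0) (b := 2) rfl rfl]
  refine indepPoly_eq_pathGraph_add_X_mul_pathGraph (k := 2) (by omega) (fun u v ↦ ?_) fun v ↦ ?_
  all_goals
    simp only [sup_adj, edge_adj, pathGraph_adj, ne_eq, Fin.ext_iff, Fin.val_succ, Fin.val_zero,
      Fin.val_two, true_and]
    omega

theorem aeval_indepPoly_pathGraph (n : ℕ) :
    aeval (-1 / 4 : ℚ) (indepPoly (pathGraph n)) = (n + 2) * (1 / 2) ^ (n + 1) := by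
  induction n using Nat.twoStepInduction with
  | zero => rw [indepPoly_of_isEmpty, map_one]; norm_num
  | one => rw [indepPoly_pathGraph_one, map_add, map_one, aeval_X]; norm_num
  | more n ih₀ ih₁ =>
    rw [indepPoly_pathGraph_add_two, map_add, map_mul, aeval_X, ih₀, ih₁]
    push_cast
    ring

theorem aeval_pathGraph_recurrence (n : ℕ) :
    aeval (-1 / 4 : ℚ) (indepPoly (pathGraph (n + 2)) + X * indepPoly (pathGraph n)) =
      2 * (1 / 2) ^ (n + 3) := by
  rw [map_add, map_mul, aeval_X, aeval_indepPoly_pathGraph, aeval_indepPoly_pathGraph]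
  push_cast
  ring

theorem aeval_indepPoly_cycleGraph {n : ℕ} (hn : 3 ≤ n) :
    aeval (-1 / 4 : ℚ) (indepPoly (cycleGraph n)) = 2 * (1 / 2) ^ n := by
  obtain ⟨n, rfl⟩ := Nat.exists_eq_add_of_le' hn
  rw [indepPoly_cycleGraph_add_three, aeval_pathGraph_recurrence]

theorem aeval_indepPoly_dGraph {n : ℕ} (hn : 3 ≤ n) :
    aeval (-1 / 4 : ℚ) (indepPoly (dGraph n)) = 2 * (1 / 2) ^ n := by
  obtain ⟨n, rfl⟩ := Nat.exists_eq_add_of_le' hn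
  rw [indepPoly_dGraph_add_three, aeval_pathGraph_recurrence]

variable {V : Type*} [Fintype V] [DecidableEq V] {G : SimpleGraph V} [DecidableRel G.Adj]

theorem aeval_indepPoly_of_excess_eq_zero (hG : G.Connected) (he : edgeExcess G = 0)
    (hc : cherryExcess G = 0) :
    aeval (-1 / 4 : ℚ) (indepPoly G) = 2 * (1 / 2) ^ Fintype.card V := by
  have := hG.nonempty
  have hcard := three_le_card_of_edgeExcess_eq_zero he
  obtain ⟨⟨φ⟩⟩ | ⟨⟨φ⟩⟩ := nonempty_iso_cycleGraph_or_dGraph hG he hc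
  · rw [indepPoly_congr φ, aeval_indepPoly_cycleGraph hcard]
  · rw [indepPoly_congr φ, aeval_indepPoly_dGraph hcard]

end Evaluation

section Assembly

variable {V : Type*} [Fintype V] (G : SimpleGraph V)

open scoped Classical in
theorem apply_indepPoly_eq_sum_component {M : Type*} [AddCommMonoid M] (φ : ℤ[X] → M)
    (hφ_one : φ 1 = 0)
    (hφ_mul : ∀ P Q : ℤ[X], P.coeff 0 = 1 → Q.coeff 0 = 1 → φ (P * Q) = φ P + φ Q) :
    φ (indepPoly G) = ∑ c : G.ConnectedComponent, φ (indepPoly c.toSimpleGraph) := by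
  rw [indepPoly_eq_prod_component]
  exact apply_prod_eq_sum_apply φ hφ_one hφ_mul _ _ fun c _ ↦ coeff_indepPoly_zero _

open scoped Classical in
theorem card_eq_sum_component : Fintype.card V = ∑ c : G.ConnectedComponent, Fintype.card c := by
  rw [← Fintype.card_sigma]
  exact Fintype.card_congr (Equiv.sigmaFiberEquiv G.connectedComponentMk).symm

open scoped Classical in
theorem edgeExcess_eq_sum_component :
    edgeExcess G = ∑ c : G.ConnectedComponent, edgeExcess c.toSimpleGraph := by
  refine mul_left_cancel₀ (two_ne_zero (α := ℤ)) ?_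
  rw [mul_sum, two_mul_edgeExcess, sum_congr rfl fun c _ ↦ two_mul_edgeExcess c.toSimpleGraph]
  refine apply_indepPoly_eq_sum_component G (fun P ↦ powerSumTwo P - 3 * P.coeff 1) ?_ ?_
  · simp [powerSumTwo, coeff_one]
  · intro P Q hP hQ
    linear_combination powerSumTwo_mul hP hQ - 3 * coeff_one_mul hP hQ

open scoped Classical in
theorem cherryExcess_eq_sum_component :
    cherryExcess G = ∑ c : G.ConnectedComponent, cherryExcess c.toSimpleGraph := by
  refine mul_left_cancel₀ (three_ne_zero (α := ℤ)) ?_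
  rw [mul_sum, three_mul_cherryExcess,
    sum_congr rfl fun c _ ↦ three_mul_cherryExcess c.toSimpleGraph]
  refine apply_indepPoly_eq_sum_component G
    (fun P ↦ powerSumThree P - 3 * powerSumTwo P - P.coeff 1) ?_ ?_
  · simp [powerSumTwo, powerSumThree, coeff_one]
  · intro P Q hP hQ
    linear_combination powerSumThree_mul hP hQ - 3 * powerSumTwo_mul hP hQ - coeff_one_mul hP hQ

variable {G}

open scoped Classical in
theorem dvd_coeff_component {p : ℕ} (hp : p.Prime)
    (hdvd : ∀ j ≠ 0, (p : ℤ) ∣ (indepPoly G).coeff j) (c : G.ConnectedComponent) :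
    ∀ j ≠ 0, (p : ℤ) ∣ (indepPoly c.toSimpleGraph).coeff j := fun j hj ↦ by
  refine dvd_coeff_of_dvd hp ?_ ?_ hdvd hj
  · rw [indepPoly_eq_prod_component G]
    exact dvd_prod_of_mem (fun c : G.ConnectedComponent ↦ indepPoly c.toSimpleGraph) (mem_univ c)
  · rw [coeff_indepPoly_zero]
    exact_mod_cast hp.not_dvd_one

open scoped Classical in
theorem edgeExcess_component_eq_zero {p : ℕ} (hp : p.Prime) (hp2 : 2 < p)
    (hdvd : ∀ j ≠ 0, (p : ℤ) ∣ (indepPoly G).coeff j) (he : edgeExcess G = 0)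
    (c : G.ConnectedComponent) : edgeExcess c.toSimpleGraph = 0 := by
  rw [edgeExcess_eq_sum_component] at he
  have coprime : IsCoprime (p : ℤ) 2 :=
    Nat.isCoprime_iff_coprime.2 ((Nat.coprime_primes hp Nat.prime_two).2 hp2.ne')
  exact eq_zero_of_dvd_of_sum_eq_zero (mod_cast hp.one_lt)
    (fun c ↦ dvd_edgeExcess coprime (dvd_coeff_component hp hdvd c))
    (fun c ↦ neg_one_le_edgeExcess c.connected_toSimpleGraph) he c

open scoped Classical in
theorem cherryExcess_component_eq_zero {p : ℕ} (hp : p.Prime) (hp3 : 3 < p)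
    (hdvd : ∀ j ≠ 0, (p : ℤ) ∣ (indepPoly G).coeff j) (he : edgeExcess G = 0)
    (hc : cherryExcess G = 0) (c : G.ConnectedComponent) :
    cherryExcess c.toSimpleGraph = 0 := by
  rw [cherryExcess_eq_sum_component] at hc
  have coprime : IsCoprime (p : ℤ) 3 :=
    Nat.isCoprime_iff_coprime.2 ((Nat.coprime_primes hp Nat.prime_three).2 hp3.ne')
  exact eq_zero_of_dvd_of_sum_eq_zero (mod_cast hp.one_lt)
    (fun c ↦ dvd_cherryExcess coprime (dvd_coeff_component hp hdvd c))
    (fun c ↦ neg_one_le_cherryExcess c.connected_toSimpleGraph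
      (edgeExcess_component_eq_zero hp (by omega) hdvd he c)) hc c

open scoped Classical in
theorem aeval_indepPoly_of_component_excess_eq_zero
    (he : ∀ c : G.ConnectedComponent, edgeExcess c.toSimpleGraph = 0)
    (hc : ∀ c : G.ConnectedComponent, cherryExcess c.toSimpleGraph = 0) :
    aeval (-1 / 4 : ℚ) (indepPoly G) =
      2 ^ Fintype.card G.ConnectedComponent * (1 / 2) ^ Fintype.card V := by
  rw [indepPoly_eq_prod_component, map_prod, prod_congr rfl fun c _ ↦
    aeval_indepPoly_of_excess_eq_zero c.connected_toSimpleGraph (he c) (hc c), prod_mul_distrib,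
    prod_const, card_univ, prod_pow_eq_pow_sum, ← card_eq_sum_component]

open scoped Classical in
theorem connected_of_component_excess_eq_zero
    (he : ∀ c : G.ConnectedComponent, edgeExcess c.toSimpleGraph = 0)
    (hc : ∀ c : G.ConnectedComponent, cherryExcess c.toSimpleGraph = 0)
    (haeval : aeval (-1 / 4 : ℚ) (indepPoly G) = 2 * (1 / 2) ^ Fintype.card V) :
    G.Connected := by
  rw [aeval_indepPoly_of_component_excess_eq_zero he hc] at haeval
  have hpow : (2 : ℚ) ^ Fintype.card G.ConnectedComponent = 2 ^ 1 := by
    rw [pow_one]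
    exact mul_right_cancel₀ (by positivity) haeval
  obtain ⟨c, hc⟩ := Fintype.card_eq_one_iff.1 (pow_right_injective₀ two_pos (by norm_num) hpow)
  have : Nonempty V := c.nonempty_supp.to_subtype.map Subtype.val
  exact ⟨fun u v ↦ ConnectedComponent.exact ((hc _).trans (hc _).symm)⟩

end Assembly

theorem indepEquiv_primePowerCycle {V : Type*} [Fintype V] (G : SimpleGraph V) (p k : ℕ)
    (hp : p.Prime) (hp5 : 5 ≤ p) (hk : 1 ≤ k)
    (h : ∀ j, indepCount G j = indepCount (SimpleGraph.cycleGraph (p ^ k)) j) :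
    Nonempty (G ≃g SimpleGraph.cycleGraph (p ^ k)) ∨ Nonempty (G ≃g dGraph (p ^ k)) := by
  classical
  have hpk : 5 ≤ p ^ k := hp5.trans (Nat.le_self_pow (by omega) p)
  have hpoly := indepPoly_eq_of_indepCount_eq h
  have hdvd (j : ℕ) (hj : j ≠ 0) : (p : ℤ) ∣ (indepPoly G).coeff j := by
    rw [coeff_indepPoly, h]
    exact_mod_cast prime_dvd_indepCount_cycleGraph hp (by omega) hj
  have hcard : Fintype.card V = p ^ k := by rw [card_eq_of_indepPoly_eq hpoly, Fintype.card_fin]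
  have he : edgeExcess G = 0 :=
    (edgeExcess_eq_of_indepPoly_eq hpoly).trans (edgeExcess_cycleGraph (by omega))
  have hc : cherryExcess G = 0 :=
    (cherryExcess_eq_of_indepPoly_eq hpoly).trans (cherryExcess_cycleGraph (by omega))
  have hG : G.Connected := connected_of_component_excess_eq_zero
    (edgeExcess_component_eq_zero hp (by omega) hdvd he)
    (cherryExcess_component_eq_zero hp (by omega) hdvd he hc)
    (by rw [hpoly, aeval_indepPoly_cycleGraph (by omega), hcard])
  exact hcard ▸ nonempty_iso_cycleGraph_or_dGraph hG he hc
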